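/- Let Q be a well-formed formula and let N be a Q-complete, Q-consistent extension of the implicational propositional calculus, with v_N defined by v_N(A) = 1 when QQA ∈ T(N) and v_N(A) = 0 when QA ∈ T(N). For all wfs A, B: if v_N(A) = 1 and v_N(B) = 0 then v_N(A ⊃ B) = 0. -/

import Mathlib

/-- Well-formed formulas of the implicational propositional calculus:
propositional variables (indexed by ℕ, so the set of wfs is countable)
and the single connective ⊃. -/
inductive Wf where
  | var : ℕ → Wf
  | imp : Wf → Wf → Wf
deriving DecidableEq

infixr:60 " ⊃' " => Wf.imp

/-- `Deduces Γ A` : `A` is deducible from the set `Γ` of extra axioms/hypotheses,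
using the three axiom schemes of IPC (including the Peirce scheme) and modus ponens.
Theorems of IPC are `Deduces ∅ A`; for an extension `M` of IPC with extra-axiom
set `E`, `T(M)` is `Deduces E`, and deducibility from hypotheses `Γ` in `M` is
`Deduces (E ∪ Γ)`. -/
inductive Deduces : Set Wf → Wf → Prop where
  | hyp : ∀ {Γ : Set Wf} {A : Wf}, A ∈ Γ → Deduces Γ A
  | ax1 : ∀ {Γ : Set Wf} (A B : Wf), Deduces Γ (A ⊃' (B ⊃' A))
  | ax2 : ∀ {Γ : Set Wf} (A B C : Wf),
      Deduces Γ ((A ⊃' (B ⊃' C)) ⊃' ((A ⊃' B) ⊃' (A ⊃' C)))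
  | peirce : ∀ {Γ : Set Wf} (A B : Wf), Deduces Γ (((A ⊃' B) ⊃' A) ⊃' A)
  | mp : ∀ {Γ : Set Wf} {A B : Wf}, Deduces Γ (A ⊃' B) → Deduces Γ A → Deduces Γ B

namespace Deduces

variable {Γ : Set Wf} {A B C D : Wf}

theorem imp_intro (A : Wf) (hB : Deduces Γ B) : Deduces Γ (A ⊃' B) :=
  mp (ax1 B A) hB

theorem imp_imp_imp_left (A : Wf) (hBC : Deduces Γ (B ⊃' C)) :
    Deduces Γ ((A ⊃' B) ⊃' (A ⊃' C)) :=
  mp (ax2 A B C) (imp_intro A hBC)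

theorem imp_trans (hAB : Deduces Γ (A ⊃' B)) (hBC : Deduces Γ (B ⊃' C)) :
    Deduces Γ (A ⊃' C) :=
  mp (imp_imp_imp_left A hBC) hAB

theorem imp_imp_of_imp_imp_of_imp (hACD : Deduces Γ ((A ⊃' C) ⊃' D))
    (hBC : Deduces Γ (B ⊃' C)) : Deduces Γ ((A ⊃' B) ⊃' D) :=
  imp_trans (imp_imp_imp_left A hBC) hACD

end Deduces

/-- Let N (extra axioms E) be a Q-complete, Q-consistent extension of IPC and
let v = v_N be defined by v(A) = 1 when QQA ∈ T(N) and v(A) = 0 when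
QA ∈ T(N).  If v(A) = 1 and v(B) = 0 then v(A ⊃ B) = 0. -/
theorem stmt_16 (Q : Wf) (E : Set Wf)
    (hcomplete : ∀ A : Wf, Deduces E ((A ⊃' Q) ⊃' Q) ∨ Deduces E (A ⊃' Q))
    (hcons : ¬ Deduces E Q)
    (v : Wf → ℕ)
    (hv1 : ∀ A : Wf, Deduces E ((A ⊃' Q) ⊃' Q) → v A = 1)
    (hv0 : ∀ A : Wf, Deduces E (A ⊃' Q) → v A = 0) :
    ∀ A B : Wf, (v A = 1 ∧ v B = 0) → v (A ⊃' B) = 0 := by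
  rintro A B ⟨hA, hB⟩
  have hQQA : Deduces E ((A ⊃' Q) ⊃' Q) :=
    (hcomplete A).resolve_right fun hQA => zero_ne_one ((hv0 A hQA).symm.trans hA)
  have hQB : Deduces E (B ⊃' Q) :=
    (hcomplete B).resolve_left fun hQQB => one_ne_zero ((hv1 B hQQB).symm.trans hB)
  exact hv0 (A ⊃' B) (hQQA.imp_imp_of_imp_imp_of_imp hQB)
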